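/- arXiv:1801.08871 — 6 statements merged into one kernel-verified Lean document; each statement's English description precedes it below -/
import Mathlib

section
/- For every integer n ≥ 2, the complete graph K_{2n} on 2n vertices satisfies 2n − 1 ≤ χ'^t_d(K_{2n}) ≤ 4n − 2. -/
/-!
The lower bound (`le_of_isTDEColoring`) holds because the `2n - 1` edges at a fixed vertex are pairwise adjacent, so they
receive distinct colors. For the upper bound, give the `2n - 1` edges at the last vertex private
colors and color the remaining `K_{2n-1}` with `2n - 1` further colors by `{a, b} ↦ a + b` modulo
`2n - 1`, which is proper. Every edge is adjacent to some edge of the star at the last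
vertex, and the color class of that star edge is a singleton
(`starColoring_isTDEColoring`).
-/

open SimpleGraph

/-- Two edges of a simple graph are adjacent if they are distinct and share an endpoint. -/
def edgeAdj {V : Type*} (e f : Sym2 V) : Prop :=
  e ≠ f ∧ ∃ v, v ∈ e ∧ v ∈ f

/-- `c` is a total dominator edge coloring of `G` using colors from `{0, …, n-1}`:
a proper edge coloring such that every edge is adjacent to every edge of some
nonempty color class. -/
def IsTDEColoring {V : Type*} (G : SimpleGraph V) (n : ℕ) (c : Sym2 V → ℕ) : Prop :=
  (∀ e ∈ G.edgeSet, c e < n) ∧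
  (∀ e ∈ G.edgeSet, ∀ f ∈ G.edgeSet, edgeAdj e f → c e ≠ c f) ∧
  (∀ e ∈ G.edgeSet, ∃ i, (∃ f ∈ G.edgeSet, c f = i) ∧
      ∀ f ∈ G.edgeSet, c f = i → edgeAdj e f)

/-- The total dominator edge chromatic number of `G`: the minimum number of colors
in a total dominator edge coloring of `G`. -/
noncomputable def tdec {V : Type*} (G : SimpleGraph V) : ℕ :=
  sInf {n | ∃ c : Sym2 V → ℕ, IsTDEColoring G n c}

/-- The coloring of `K_{m+1}` on `{0, …, m}` with `2 * m` colors: an edge `{a, b}` avoiding `m` gets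
`(a + b) % m < m`, while `{a, m}` gets its private color `a + m ≥ m`. -/
def starColoring (N m : ℕ) : Sym2 (Fin N) → ℕ :=
  Sym2.lift ⟨fun a b => if a.val = m ∨ b.val = m then a.val + b.val else (a.val + b.val) % m,
    fun a b => by simp only [or_comm, add_comm]⟩

theorem starColoring_mk (N m : ℕ) (a b : Fin N) : starColoring N m s(a, b) =
    if a.val = m ∨ b.val = m then a.val + b.val else (a.val + b.val) % m := rfl

theorem add_mod_left_inj {m v x y : ℕ} (hx : x < m) (hy : y < m)
    (h : (v + x) % m = (v + y) % m) : x = y := by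
  have h' : x ≡ y [MOD m] := Nat.ModEq.add_left_cancel' v h
  exact Nat.ModEq.eq_of_lt_of_lt h' hx hy

theorem starColoring_inj {N m : ℕ} (hm : 0 < m) (hN : N = m + 1) {v x y : Fin N} (hx : v ≠ x)
    (hy : v ≠ y) (h : starColoring N m s(v, x) = starColoring N m s(v, y)) : x = y := by
  have hx' : v.val ≠ x.val := fun h => hx (Fin.ext h)
  have hy' : v.val ≠ y.val := fun h => hy (Fin.ext h)
  rw [starColoring_mk, starColoring_mk] at h
  apply Fin.ext
  have h1 := Nat.mod_lt (v.val + x.val) hm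
  have h2 := Nat.mod_lt (v.val + y.val) hm
  split_ifs at h with p q q
  · omega
  · omega
  · omega
  · exact add_mod_left_inj (v := v.val) (m := m) (by omega) (by omega) h

/-- The color class of an edge at the vertex `m` is a singleton. -/
theorem starColoring_singleton {N m : ℕ} (hm : 0 < m) (hN : N = m + 1) {l w : Fin N}
    (hl : l.val = m) {f : Sym2 (Fin N)}
    (hf : f ∈ (⊤ : SimpleGraph (Fin N)).edgeSet)
    (h : starColoring N m f = starColoring N m s(l, w)) : f = s(l, w) := by
  induction f using Sym2.ind with
  | _ a b =>
    have hab : a ≠ b := by simpa using hf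
    have hab' : a.val ≠ b.val := fun h => hab (Fin.ext h)
    rw [starColoring_mk, starColoring_mk, if_pos (Or.inl hl)] at h
    have h1 := Nat.mod_lt (a.val + b.val) hm
    split_ifs at h with p
    · rcases p with p | p
      · have ha : a = l := Fin.ext (by omega)
        have hb : b = w := Fin.ext (by omega)
        rw [ha, hb]
      · have ha : a = w := Fin.ext (by omega)
        have hb : b = l := Fin.ext (by omega)
        rw [ha, hb, Sym2.eq_swap]
    · omega

theorem exists_star_edgeAdj {N m : ℕ} (hm : 2 ≤ m) (hN : N = m + 1) {l : Fin N} (hl : l.val = m)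
    {e : Sym2 (Fin N)} (he : e ∈ (⊤ : SimpleGraph (Fin N)).edgeSet) :
    ∃ w : Fin N, w.val < m ∧ edgeAdj e s(l, w) := by
  induction e using Sym2.ind with
  | _ a b =>
    have hab : a ≠ b := by simpa using he
    by_cases hle : l ∈ s(a, b)
    -- An edge at `l` is adjacent to another edge at `l`; one of the ends `0`, `1` is free.
    · have key : ∀ w : Fin N, w ∉ s(a, b) → edgeAdj s(a, b) s(l, w) := fun w hw =>
        ⟨fun h => hw (h ▸ Sym2.mem_mk_right l w), l, hle, Sym2.mem_mk_left l w⟩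
      by_cases h0 : (⟨0, by omega⟩ : Fin N) ∈ s(a, b)
      · refine ⟨⟨1, by omega⟩, by simp; omega, key _ fun h1 => ?_⟩
        simp only [Sym2.mem_iff, Fin.ext_iff] at h0 h1 hle
        omega
      · exact ⟨⟨0, by omega⟩, by simp; omega, key _ h0⟩
    · have hal : a ≠ l := fun h => hle (h ▸ Sym2.mem_mk_left a b)
      have hal' : a.val ≠ l.val := fun h => hal (Fin.ext h)
      exact ⟨a, by omega, fun h => hle (h ▸ Sym2.mem_mk_left l a), a, Sym2.mem_mk_left a b,
        Sym2.mem_mk_right l a⟩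

theorem starColoring_isTDEColoring {N m : ℕ} (hm : 2 ≤ m) (hN : N = m + 1) :
    IsTDEColoring (⊤ : SimpleGraph (Fin N)) (2 * m) (starColoring N m) := by
  have hm0 : 0 < m := by omega
  refine ⟨fun e he => ?_, fun e he f hf hadj hc => ?_, fun e he => ?_⟩
  · induction e using Sym2.ind with
    | _ a b =>
      have hab : a ≠ b := by simpa using he
      have hab' : a.val ≠ b.val := fun h => hab (Fin.ext h)
      rw [starColoring_mk]
      have h1 := Nat.mod_lt (a.val + b.val) hm0
      split_ifs <;> omega
  · obtain ⟨hne, v, hve, hvf⟩ := hadj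
    obtain ⟨x, rfl⟩ := hve
    obtain ⟨y, rfl⟩ := hvf
    have hx : v ≠ x := by simpa using he
    have hy : v ≠ y := by simpa using hf
    exact hne (by rw [starColoring_inj hm0 hN hx hy hc])
  · have hl : (⟨m, by omega⟩ : Fin N).val = m := rfl
    obtain ⟨w, hw, hadj⟩ := exists_star_edgeAdj hm hN hl he
    refine ⟨_, ⟨s(⟨m, by omega⟩, w), ?_, rfl⟩, fun f hf hc => ?_⟩
    · have : (⟨m, by omega⟩ : Fin N) ≠ w := fun h => by
        have := congrArg Fin.val h
        simp at this
        omega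
      simpa using this
    · rwa [starColoring_singleton hm0 hN hl hf hc]

theorem le_of_isTDEColoring {N m k : ℕ} (hN : N = m + 1) {c : Sym2 (Fin N) → ℕ}
    (h : IsTDEColoring (⊤ : SimpleGraph (Fin N)) k c) : m ≤ k := by
  subst hN
  obtain ⟨hlt, hproper, -⟩ := h
  have hmem : ∀ i : Fin m, s(0, i.succ) ∈ (⊤ : SimpleGraph (Fin (m + 1))).edgeSet := fun i => by
    simpa using (Fin.succ_ne_zero i).symm
  have hinj : Function.Injective
      (fun i : Fin m => (⟨c s(0, i.succ), hlt _ (hmem i)⟩ : Fin k)) := by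
    intro i j hij
    by_contra hne
    refine hproper _ (hmem i) _ (hmem j) ⟨fun h => hne ?_, 0, Sym2.mem_mk_left _ _,
      Sym2.mem_mk_left _ _⟩ (congrArg Fin.val hij)
    exact Fin.succ_injective _ (Sym2.congr_right.mp h)
  simpa using Fintype.card_le_of_injective _ hinj

/-- For n ≥ 2, the complete graph K_{2n} satisfies 2n−1 ≤ χ'ᵗ_d(K_{2n}) ≤ 4n−2. -/
theorem tdec_completeGraph_even (n : ℕ) (hn : 2 ≤ n) :
    2 * n - 1 ≤ tdec (⊤ : SimpleGraph (Fin (2 * n))) ∧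
    tdec (⊤ : SimpleGraph (Fin (2 * n))) ≤ 4 * n - 2 := by
  have hc := starColoring_isTDEColoring (N := 2 * n) (m := 2 * n - 1) (by omega) (by omega)
  have hmem : 2 * (2 * n - 1) ∈
      {k | ∃ c : Sym2 (Fin (2 * n)) → ℕ, IsTDEColoring (⊤ : SimpleGraph (Fin (2 * n))) k c} :=
    ⟨_, hc⟩
  constructor
  · obtain ⟨c, h⟩ := Nat.sInf_mem ⟨_, hmem⟩
    exact le_of_isTDEColoring (by omega) h
  · have := Nat.sInf_le hmem
    unfold tdec
    omega
end

section
/- For all integers n, m with 1 ≤ n < m, the complete bipartite graph K_{n,m} satisfies max{n, m} ≤ χ'^t_d(K_{n,m}) ≤ m + n − 1. -/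
/-! An edge of `K_{n,m}` is a cell `(i, j)` of an `n × m` array, and two edges are adjacent when their
cells are distinct and lie in a common row or column.

Lower bound: the `m` cells of a row receive distinct colors, and `m` is the larger side.

Upper bound: give the `n` cells of column `0` private colors, each used only once, and color the
remaining `n × (m - 1)` array cyclically with `m - 1` further colors, which is proper because
`n ≤ m - 1`. A cell `(i, j)` with `j ≠ 0` is dominated by the singleton class of `(i, 0)`. The cell
`(i, 0)` is dominated by the singleton class of another cell of column `0` if `n ≥ 2`; if `n = 1`
every class is a singleton, so `(0, 1)` works. -/

open SimpleGraph

lemma mem_edgeSet_completeBipartite {n m : ℕ} (e : Sym2 (Fin n ⊕ Fin m)) :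
    e ∈ (completeBipartiteGraph (Fin n) (Fin m)).edgeSet ↔
      ∃ i j, e = s(Sum.inl i, Sum.inr j) := by
  induction e using Sym2.ind with
  | _ x y => rcases x with x | x <;> rcases y with y | y <;> simp

lemma edgeAdj_cell {n m : ℕ} (i i' : Fin n) (j j' : Fin m) :
    edgeAdj (s(Sum.inl i, Sum.inr j) : Sym2 (Fin n ⊕ Fin m)) s(Sum.inl i', Sum.inr j') ↔
      (i = i' ∧ j ≠ j') ∨ (i ≠ i' ∧ j = j') := by
  simp only [edgeAdj, ne_eq, Sym2.mem_iff, Sym2.eq_iff, Sum.exists]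
  grind

/-- The color of the cell `(i, j)`: column `0` uses the private colors `m - 1, …, m + n - 2`, and
the other columns are colored cyclically with `0, …, m - 2`. -/
def cellColor (m i j : ℕ) : ℕ :=
  if j = 0 then m - 1 + i else (i + (j - 1)) % (m - 1)

/-- `cellColor` as a function of unordered pairs of vertices, with value `0` on non-edges. -/
def bipColor (n m : ℕ) : Sym2 (Fin n ⊕ Fin m) → ℕ :=
  Sym2.lift ⟨fun x y => match x, y with
    | Sum.inl i, Sum.inr j => cellColor m i j
    | Sum.inr j, Sum.inl i => cellColor m i j
    | _, _ => 0, by rintro (x | x) (y | y) <;> rfl⟩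

lemma bipColor_cell {n m : ℕ} (i : Fin n) (j : Fin m) :
    bipColor n m s(Sum.inl i, Sum.inr j) = cellColor m i j := rfl

lemma add_mod_left_inj_s9 {a b c k : ℕ} (hb : b < k) (hc : c < k)
    (h : (a + b) % k = (a + c) % k) : b = c :=
  (Nat.ModEq.add_left_cancel' a h).eq_of_lt_of_lt hb hc

lemma cellColor_lt {m i j : ℕ} (hm : 2 ≤ m) (hj : j ≠ 0) : cellColor m i j < m - 1 := by
  rw [cellColor, if_neg hj]
  exact Nat.mod_lt _ (by omega)

lemma cellColor_row_inj {m i j j' : ℕ} (hm : 2 ≤ m) (hj : j < m) (hj' : j' < m)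
    (h : cellColor m i j = cellColor m i j') : j = j' := by
  by_cases h0 : j = 0 <;> by_cases h0' : j' = 0
  · omega
  · have := cellColor_lt (i := i) hm h0'
    simp only [cellColor, h0, if_true] at h this
    omega
  · have := cellColor_lt (i := i) hm h0
    simp only [cellColor, h0', if_true] at h this
    omega
  · simp only [cellColor, h0, h0', if_false] at h
    have := add_mod_left_inj_s9 (by omega) (by omega) h
    omega

lemma cellColor_col_inj {n m i i' j : ℕ} (hnm : n < m) (hi : i < n) (hi' : i' < n)
    (h : cellColor m i j = cellColor m i' j) : i = i' := by
  by_cases h0 : j = 0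
  · simp only [cellColor, h0, if_true] at h
    omega
  · simp only [cellColor, h0, if_false] at h
    rw [Nat.add_comm i, Nat.add_comm i'] at h
    exact add_mod_left_inj_s9 (by omega) (by omega) h

/-- The cells of column `0` form singleton color classes. -/
lemma cellColor_eq_private {m i i' j : ℕ} (hm : 2 ≤ m)
    (h : cellColor m i' j = cellColor m i 0) : i' = i ∧ j = 0 := by
  by_cases h0 : j = 0
  · simp only [cellColor, h0, if_true] at h
    omega
  · have := cellColor_lt (i := i') hm h0
    simp only [cellColor, if_true] at h this
    omega

lemma isTDEColoring_bipColor {n m : ℕ} (hnm : n < m) (hm : 2 ≤ m) :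
    IsTDEColoring (completeBipartiteGraph (Fin n) (Fin m)) (m + n - 1) (bipColor n m) := by
  simp only [IsTDEColoring, mem_edgeSet_completeBipartite]
  refine ⟨?_, ?_, ?_⟩
  · rintro _ ⟨i, j, rfl⟩
    rw [bipColor_cell]
    by_cases h0 : (j : ℕ) = 0
    · simp only [cellColor, h0, if_true]
      omega
    · have := cellColor_lt (i := i) hm h0
      omega
  · rintro _ ⟨i, j, rfl⟩ _ ⟨i', j', rfl⟩ hadj h
    rw [bipColor_cell, bipColor_cell] at h
    rcases (edgeAdj_cell i i' j j').1 hadj with ⟨rfl, hne⟩ | ⟨hne, rfl⟩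
    · exact hne (Fin.ext (cellColor_row_inj hm j.2 j'.2 h))
    · exact hne (Fin.ext (cellColor_col_inj hnm i.2 i'.2 h))
  · rintro _ ⟨i, j, rfl⟩
    -- It suffices to find an adjacent cell whose color class is a singleton.
    suffices H : ∃ (a : Fin n) (b : Fin m), ((i = a ∧ j ≠ b) ∨ (i ≠ a ∧ j = b)) ∧
        ∀ (a' : Fin n) (b' : Fin m), cellColor m a' b' = cellColor m a b → a' = a ∧ b' = b by
      obtain ⟨a, b, hab, hu⟩ := H
      refine ⟨cellColor m a b, ⟨_, ⟨a, b, rfl⟩, rfl⟩, ?_⟩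
      rintro _ ⟨a', b', rfl⟩ h
      obtain ⟨rfl, rfl⟩ := hu a' b' h
      exact (edgeAdj_cell _ _ _ _).2 hab
    have hpriv : ∀ (a a' : Fin n) (b' : Fin m),
        cellColor m a' b' = cellColor m a (⟨0, by omega⟩ : Fin m) →
          a' = a ∧ b' = ⟨0, by omega⟩ := fun a a' b' h =>
      (cellColor_eq_private hm h).imp Fin.ext Fin.ext
    by_cases h0 : j = ⟨0, by omega⟩
    · by_cases h1 : ∃ a : Fin n, i ≠ a
      · obtain ⟨a, ha⟩ := h1
        exact ⟨a, ⟨0, by omega⟩, Or.inr ⟨ha, h0⟩, hpriv a⟩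
      · push Not at h1
        refine ⟨i, ⟨1, by omega⟩, Or.inl ⟨rfl, by simp [h0]⟩, fun a' b' h => ?_⟩
        obtain rfl := h1 a'
        exact ⟨rfl, Fin.ext (cellColor_row_inj hm b'.2 (by simp; omega) h)⟩
    · exact ⟨i, ⟨0, by omega⟩, Or.inl ⟨rfl, h0⟩, hpriv i⟩

/-- The `m` edges at a vertex of the first part have pairwise distinct colors. -/
lemma le_of_isTDEColoring_s9 {n m k : ℕ} (hn : 1 ≤ n) {c : Sym2 (Fin n ⊕ Fin m) → ℕ}
    (hc : IsTDEColoring (completeBipartiteGraph (Fin n) (Fin m)) k c) : m ≤ k := by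
  obtain ⟨hlt, hproper, -⟩ := hc
  simp only [mem_edgeSet_completeBipartite] at hlt hproper
  let f : Fin m → Fin k := fun j =>
    ⟨c s(Sum.inl ⟨0, hn⟩, Sum.inr j), hlt _ ⟨_, _, rfl⟩⟩
  have hf : Function.Injective f := by
    intro j j' h
    by_contra hne
    exact hproper _ ⟨_, _, rfl⟩ _ ⟨_, _, rfl⟩
      ((edgeAdj_cell _ _ _ _).2 (Or.inl ⟨rfl, hne⟩)) (Fin.ext_iff.1 h)
  simpa using Fintype.card_le_of_injective f hf

/-- For 1 ≤ n < m, the complete bipartite graph K_{n,m} satisfies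
max{n,m} ≤ χ'ᵗ_d(K_{n,m}) ≤ m + n − 1. -/
theorem tdec_completeBipartite_ne (n m : ℕ) (hn : 1 ≤ n) (hnm : n < m) :
    max n m ≤ tdec (completeBipartiteGraph (Fin n) (Fin m)) ∧
    tdec (completeBipartiteGraph (Fin n) (Fin m)) ≤ m + n - 1 := by
  have hmem := isTDEColoring_bipColor hnm (by omega)
  rw [max_eq_right hnm.le]
  refine ⟨le_csInf ⟨_, _, hmem⟩ ?_, Nat.sInf_le ⟨_, hmem⟩⟩
  rintro k ⟨c, hc⟩
  exact le_of_isTDEColoring_s9 hn hc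
end

section
/- Let G be a finite connected simple graph and let e be an edge of G that is not a bridge (so G − e is connected), and suppose G has at least three edges. Then χ'^t_d(G) − 2 ≤ χ'^t_d(G − e) ≤ χ'^t_d(G) + 2, where G − e is the graph obtained from G by deleting the edge e. -/
/-!
Giving a single edge a color of its own never hurts: the coloring stays proper, every edge that
was dominated by some color class stays dominated (`Dominates.update`), and every edge adjacent to
the isolated one becomes dominated (`dominates_update_self`). Both inequalities come from isolating
a few edges. Write `e = uv`; since `e` is not a bridge and `G` has at least three edges, `G - e` is
connected with at least two edges, so each of its edges has an adjacent edge in `G - e`.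

For `χ(G) ≤ χ(G - e) + 2`, take an optimal coloring of `G - e`, isolate `e`, and isolate one further
edge at `u`, which then dominates `e`.

For `χ(G - e) ≤ χ(G) + 2`, restrict an optimal coloring of `G` to `G - e`. This can fail only if
`{e}` is itself a color class, and then only at edges meeting `u` or `v`; in that case the color of
`e` is free for reuse. The class dominating `e` in `G` contains at most one edge at `u` and at most
one at `v`; by symmetry it contains an edge `a` at `u`. Let `b` be its edge at `v` if there is one,
and any edge of `G - e` at `v` otherwise. Recoloring `b` with the free color makes both `{a}` and
`{b}` color classes, and these dominate all edges at `u` and `v` except possibly `a` and `b`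
themselves. Isolating one neighbor of `a` and one neighbor of `b` costs two new colors and
repairs those (`exists_coloring_of_dominating_class`).
-/

open SimpleGraph

/-- `c` is a proper coloring of the edge set `E` with colors below `n`. -/
def ProperOn {V : Type*} (E : Set (Sym2 V)) (n : ℕ) (c : Sym2 V → ℕ) : Prop :=
  (∀ e ∈ E, c e < n) ∧ ∀ e ∈ E, ∀ f ∈ E, edgeAdj e f → c e ≠ c f

/-- Some nonempty color class of `c` on `E` consists of edges adjacent to `e`. The edge `e` itself
need not belong to `E`. -/
def Dominates {V : Type*} (E : Set (Sym2 V)) (c : Sym2 V → ℕ) (e : Sym2 V) : Prop :=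
  ∃ i, (∃ f ∈ E, c f = i) ∧ ∀ f ∈ E, c f = i → edgeAdj e f

section Isolate

variable {V : Type*} {E : Set (Sym2 V)} {n k : ℕ} {c : Sym2 V → ℕ} {a f : Sym2 V}

open Classical in
lemma ProperOn.update (hc : ProperOn E n c) (hk : ∀ f ∈ E, c f ≠ k) (hkn : k < n) :
    ProperOn E n (Function.update c a k) := by
  refine ⟨fun f hf => ?_, fun f hf g hg hfg => ?_⟩
  · have := hc.1 f hf
    simp only [Function.update_apply]
    split_ifs <;> assumption
  · have h1 := hc.2 f hf g hg hfg
    have h2 := hk f hf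
    have h3 := hk g hg
    have h4 := hfg.1
    simp only [Function.update_apply]
    split_ifs with h5 h6 h6
    · exact absurd (h5.trans h6.symm) h4
    · exact h3.symm
    · exact h2
    · exact h1

lemma ProperOn.mono (hc : ProperOn E n c) {m : ℕ} (h : n ≤ m) : ProperOn E m c :=
  ⟨fun f hf => (hc.1 f hf).trans_le h, hc.2⟩

lemma ProperOn.fresh (hc : ProperOn E n c) : ∀ f ∈ E, c f ≠ n :=
  fun f hf => (hc.1 f hf).ne

open Classical in
/-- An edge adjacent to an edge with a color of its own is dominated. -/
lemma dominates_update_self (hk : ∀ f ∈ E, c f ≠ k) (ha : a ∈ E) (hfa : edgeAdj f a) :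
    Dominates E (Function.update c a k) f := by
  refine ⟨k, ⟨a, ha, by simp⟩, fun g hg hgk => ?_⟩
  by_cases h : g = a
  · exact h ▸ hfa
  · rw [Function.update_of_ne h] at hgk
    exact absurd hgk (hk g hg)

open Classical in
/-- Moving one edge to an unused color preserves domination: the old dominating class either keeps
another edge, or was `{a}` and merely changes its color. -/
lemma Dominates.update (h : Dominates E c f) (hk : ∀ f ∈ E, c f ≠ k) (a : Sym2 V) :
    Dominates E (Function.update c a k) f := by
  obtain ⟨i, ⟨g, hg, hgi⟩, hi⟩ := h
  by_cases hga : ∃ g' ∈ E, c g' = i ∧ g' ≠ a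
  · obtain ⟨g', hg', hgi', hne⟩ := hga
    refine ⟨i, ⟨g', hg', by rw [Function.update_of_ne hne, hgi']⟩, fun x hx hxi => ?_⟩
    by_cases hxa : x = a
    · subst hxa
      rw [Function.update_self] at hxi
      exact absurd (hgi.trans hxi.symm) (hk g hg)
    · rw [Function.update_of_ne hxa] at hxi
      exact hi x hx hxi
  · push Not at hga
    obtain rfl := hga g hg hgi
    exact dominates_update_self hk hg (hi g hg hgi)

open Classical in
/-- Two further colors dominate the neighbors of any two given edges of `E`. -/
lemma exists_isolate_two (hc : ProperOn E n c) {a' b' : Sym2 V} (ha' : a' ∈ E) (hb' : b' ∈ E) :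
    ∃ c', ProperOn E (n + 2) c' ∧ (∀ f, Dominates E c f → Dominates E c' f) ∧
      (∀ f, edgeAdj f a' → Dominates E c' f) ∧ ∀ f, edgeAdj f b' → Dominates E c' f := by
  have h1 : ProperOn E (n + 1) (Function.update c a' n) :=
    (hc.mono n.le_succ).update hc.fresh n.lt_succ_self
  exact ⟨Function.update (Function.update c a' n) b' (n + 1),
    (h1.mono (Nat.le_succ _)).update h1.fresh (Nat.lt_succ_self _),
    fun f hf => (hf.update hc.fresh a').update h1.fresh b',
    fun f hf => (dominates_update_self hc.fresh ha' hf).update h1.fresh b',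
    fun f hf => dominates_update_self h1.fresh hb' hf⟩

end Isolate

open Classical in
/-- The case where `{s(u, v)}` is a color class of color `k`, unused on the remaining edges `E`, and
the class of color `i` dominating `s(u, v)` contains an edge `a` at `u`. -/
lemma exists_coloring_of_dominating_class {V : Type*} {E : Set (Sym2 V)} {n k i : ℕ}
    {c : Sym2 V → ℕ} {u v : V} {a : Sym2 V}
    (hnb : ∀ f ∈ E, ∃ g ∈ E, edgeAdj f g) (hv : ∃ b ∈ E, v ∈ b)
    (hc : ProperOn E n c) (hkn : k < n) (hk : ∀ f ∈ E, c f ≠ k)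
    (huv : u ≠ v) (he : s(u, v) ∉ E) (ha : a ∈ E) (hai : c a = i) (hua : u ∈ a)
    (hi : ∀ f ∈ E, c f = i → edgeAdj s(u, v) f)
    (hdom : ∀ f ∈ E, Dominates E c f ∨ edgeAdj f s(u, v)) :
    ∃ c', ProperOn E (n + 2) c' ∧ ∀ f ∈ E, Dominates E c' f := by
  obtain ⟨b, hb, hvb, hbi⟩ : ∃ b ∈ E, v ∈ b ∧ ((∃ b' ∈ E, v ∈ b' ∧ c b' = i) → c b = i) := by
    by_cases h : ∃ b' ∈ E, v ∈ b' ∧ c b' = i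
    · obtain ⟨b', h1, h2, h3⟩ := h
      exact ⟨b', h1, h2, fun _ => h3⟩
    · obtain ⟨b, h1, h2⟩ := hv
      exact ⟨b, h1, h2, fun h' => absurd h' h⟩
  have hab : a ≠ b := by
    rintro rfl
    exact he (((Sym2.mem_and_mem_iff huv).1 ⟨hua, hvb⟩) ▸ ha)
  have hc₁ : ProperOn E n (Function.update c b k) := hc.update hk hkn
  have hclass : ∀ h ∈ E, Function.update c b k h = i → h = a := by
    intro h hh hhi
    by_cases hhb : h = b
    · subst hhb
      rw [Function.update_self] at hhi
      exact absurd (hai.trans hhi.symm) (hk a ha)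
    · rw [Function.update_of_ne hhb] at hhi
      obtain ⟨-, w, hw, hwh⟩ := hi h hh hhi
      by_contra hha
      rcases Sym2.mem_iff.1 hw with rfl | rfl
      · exact hc.2 h hh a ha ⟨hha, w, hwh, hua⟩ (hhi.trans hai.symm)
      · exact hc.2 h hh b hb ⟨hhb, w, hwh, hvb⟩ (hhi.trans (hbi ⟨h, hh, hwh, hhi⟩).symm)
  obtain ⟨a', ha', haa'⟩ := hnb a ha
  obtain ⟨b', hb', hbb'⟩ := hnb b hb
  obtain ⟨c', hc', hmono, hda, hdb⟩ := exists_isolate_two hc₁ ha' hb'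
  refine ⟨c', hc', fun f hf => ?_⟩
  rcases hdom f hf with h | ⟨-, w, hwf, hw⟩
  · exact hmono f (h.update hk b)
  rcases Sym2.mem_iff.1 hw with rfl | rfl
  · by_cases hfa : f = a
    · exact hda f (hfa ▸ haa')
    · refine hmono f ⟨i, ⟨a, ha, by rw [Function.update_of_ne hab, hai]⟩, fun g hg hgi => ?_⟩
      rw [hclass g hg hgi]
      exact ⟨hfa, w, hwf, hua⟩
  · by_cases hfb : f = b
    · exact hdb f (hfb ▸ hbb')
    · exact hmono f (dominates_update_self hk hb ⟨hfb, w, hwf, hvb⟩)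

open Classical in
/-- Passing to `E \ {s(u, v)}` costs at most two colors. -/
lemma exists_coloring_diff {V : Type*} {E : Set (Sym2 V)} {n : ℕ} {c : Sym2 V → ℕ} {u v : V}
    (huv : u ≠ v) (he : s(u, v) ∈ E)
    (hnb : ∀ f ∈ E \ {s(u, v)}, ∃ g ∈ E \ {s(u, v)}, edgeAdj f g)
    (hu : ∃ b ∈ E \ {s(u, v)}, u ∈ b) (hv : ∃ b ∈ E \ {s(u, v)}, v ∈ b)
    (hc : ProperOn E n c) (hd : ∀ f ∈ E, Dominates E c f) :
    ∃ c', ProperOn (E \ {s(u, v)}) (n + 2) c' ∧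
      ∀ f ∈ E \ {s(u, v)}, Dominates (E \ {s(u, v)}) c' f := by
  have hc₀ : ProperOn (E \ {s(u, v)}) n c :=
    ⟨fun f hf => hc.1 f hf.1, fun f hf g hg => hc.2 f hf.1 g hg.1⟩
  by_cases hk : ∃ g ∈ E \ {s(u, v)}, c g = c s(u, v)
  -- If the class of `s(u, v)` keeps an edge, every class stays nonempty under restriction.
  · obtain ⟨g, hg, hgc⟩ := hk
    refine ⟨c, hc₀.mono (Nat.le_add_right n 2), fun f hf => ?_⟩
    obtain ⟨i, ⟨h, hh, hhi⟩, hi⟩ := hd f hf.1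
    refine ⟨i, ?_, fun x hx => hi x hx.1⟩
    by_cases hhe : h = s(u, v)
    · exact ⟨g, hg, by rw [hgc, ← hhe, hhi]⟩
    · exact ⟨h, ⟨hh, hhe⟩, hhi⟩
  push Not at hk
  have hdom : ∀ f ∈ E \ {s(u, v)}, Dominates (E \ {s(u, v)}) c f ∨ edgeAdj f s(u, v) := by
    intro f hf
    obtain ⟨i, ⟨h, hh, hhi⟩, hi⟩ := hd f hf.1
    by_cases hhe : h = s(u, v)
    · exact .inr (hhe ▸ hi h hh hhi)
    · exact .inl ⟨i, ⟨h, ⟨hh, hhe⟩, hhi⟩, fun x hx => hi x hx.1⟩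
  obtain ⟨i, ⟨a, ha, hai⟩, hi⟩ := hd _ he
  have hea := hi a ha hai
  have ha₀ : a ∈ E \ {s(u, v)} := ⟨ha, hea.1.symm⟩
  obtain ⟨-, w, hw, hwa⟩ := hea
  rcases Sym2.mem_iff.1 hw with rfl | rfl
  · exact exists_coloring_of_dominating_class hnb hv hc₀ (hc.1 _ he) hk huv (by simp) ha₀ hai hwa
      (fun f hf => hi f hf.1) hdom
  -- By symmetry, exchange the roles of `u` and `v`.
  · rw [Sym2.eq_swap] at *
    exact exists_coloring_of_dominating_class hnb hu hc₀ (hc.1 _ he) hk huv.symm (by simp) ha₀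
      hai hwa (fun f hf => hi f hf.1) hdom

open Classical in
/-- Adding an edge `e` that has an adjacent edge `a` costs at most two colors: isolate `e` and
`a`. -/
lemma exists_coloring_of_diff {V : Type*} {E : Set (Sym2 V)} {n : ℕ} {c : Sym2 V → ℕ}
    {e a : Sym2 V} (ha : a ∈ E) (hea : edgeAdj e a)
    (hc : ProperOn (E \ {e}) n c) (hd : ∀ f ∈ E \ {e}, Dominates (E \ {e}) c f) :
    ∃ c', ProperOn E (n + 2) c' ∧ ∀ f ∈ E, Dominates E c' f := by
  have hval : ∀ f ∈ E, f ≠ e → Function.update c e n f = c f ∧ c f < n := fun f hf hfe =>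
    ⟨Function.update_of_ne hfe _ _, hc.1 f ⟨hf, hfe⟩⟩
  have h1 : ProperOn E (n + 1) (Function.update c e n) := by
    refine ⟨fun f hf => ?_, fun f hf g hg hfg => ?_⟩
    · by_cases hfe : f = e
      · simp [hfe]
      · have := hval f hf hfe
        omega
    · by_cases hfe : f = e <;> by_cases hge : g = e
      · exact absurd (hfe.trans hge.symm) hfg.1
      · have := hval g hg hge
        rw [hfe, Function.update_self]
        omega
      · have := hval f hf hfe
        rw [hge, Function.update_self]
        omega
      · rw [(hval f hf hfe).1, (hval g hg hge).1]
        exact hc.2 f ⟨hf, hfe⟩ g ⟨hg, hge⟩ hfg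
  refine ⟨Function.update (Function.update c e n) a (n + 1),
    (h1.mono (Nat.le_succ _)).update h1.fresh (Nat.lt_succ_self _), fun f hf => ?_⟩
  by_cases hfe : f = e
  · exact dominates_update_self h1.fresh ha (hfe ▸ hea)
  refine Dominates.update ?_ h1.fresh a
  obtain ⟨i, ⟨g, hg, hgi⟩, hi⟩ := hd f ⟨hf, hfe⟩
  refine ⟨i, ⟨g, hg.1, (hval g hg.1 hg.2).1.trans hgi⟩, fun x hx hxi => ?_⟩
  by_cases hxe : x = e
  · rw [hxe, Function.update_self] at hxi
    exact absurd (hgi.trans hxi.symm) (hc.fresh g hg)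
  · exact hi x ⟨hx, hxe⟩ ((hval x hx hxe).1.symm.trans hxi)

/-- In a connected graph with at least two edges, every edge has an adjacent edge. -/
lemma exists_edgeAdj_of_connected {V : Type*} {H : SimpleGraph V} (hH : H.Connected)
    {f g : Sym2 V} (hf : f ∈ H.edgeSet) (hg : g ∈ H.edgeSet) (hgf : g ≠ f) :
    ∃ h ∈ H.edgeSet, edgeAdj f h := by
  induction f with | h x y =>
  induction g with | h p q =>
  by_cases hp : p ∈ s(x, y)
  · exact ⟨_, hg, hgf.symm, p, hp, Sym2.mem_mk_left p q⟩
  -- Otherwise a walk from `x` to `p` leaves `{x, y}` along an edge adjacent to `s(x, y)`.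
  · obtain ⟨w⟩ := hH.preconnected x p
    obtain ⟨d, -, hd1, hd2⟩ := w.exists_boundary_dart {z | z ∈ s(x, y)} (by simp) hp
    refine ⟨s(d.fst, d.snd), d.adj, ?_, d.fst, hd1, by simp⟩
    intro h
    exact hd2 (by rw [Set.mem_ofPred_eq, h]; simp)

lemma exists_mem_edgeSet_of_connected {V : Type*} {H : SimpleGraph V} (hH : H.Connected)
    {u v : V} (huv : u ≠ v) : ∃ b ∈ H.edgeSet, u ∈ b := by
  obtain ⟨w⟩ := hH.preconnected u v
  obtain ⟨d, -, hd1, -⟩ := w.exists_boundary_dart {u} rfl huv.symm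
  exact ⟨s(d.fst, d.snd), d.adj, by rw [Set.mem_singleton_iff] at hd1; simp [hd1]⟩

/-- If every edge has an adjacent edge, coloring all edges differently is a TDE-coloring, so the
infimum defining `tdec` is attained. -/
lemma tdec_mem {V : Type*} [Finite V] (H : SimpleGraph V)
    (h : ∀ f ∈ H.edgeSet, ∃ g ∈ H.edgeSet, edgeAdj f g) :
    ∃ c, IsTDEColoring H (tdec H) c := by
  refine Nat.sInf_mem (s := {n | ∃ c : Sym2 V → ℕ, IsTDEColoring H n c}) ?_
  have : Finite (Sym2 V) := Quot.finite _
  obtain ⟨n, ⟨φ⟩⟩ := Finite.exists_equiv_fin (Sym2 V)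
  have hinj : ∀ f g, (φ f : ℕ) = φ g → f = g := fun f g hfg => φ.injective (Fin.ext hfg)
  refine ⟨n, fun f => φ f, fun f _ => (φ f).isLt, fun f _ g _ hfg hφ => hfg.1 (hinj f g hφ),
    fun f hf => ?_⟩
  obtain ⟨g, hg, hfg⟩ := h f hf
  exact ⟨φ g, ⟨g, hg, rfl⟩, fun x _ hx => hinj x g hx ▸ hfg⟩

/-- Edge removal: if `e` is not a bridge of the connected graph `G` (with at
least three edges), then χ'ᵗ_d(G) − 2 ≤ χ'ᵗ_d(G − e) ≤ χ'ᵗ_d(G) + 2. -/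
theorem tdec_deleteEdges {V : Type*} [Fintype V] (G : SimpleGraph V)
    (hconn : G.Connected) (e : Sym2 V) (he : e ∈ G.edgeSet)
    (hbridge : ¬ G.IsBridge e) (hm : 3 ≤ G.edgeSet.ncard) :
    tdec G - 2 ≤ tdec (G.deleteEdges {e}) ∧
    tdec (G.deleteEdges {e}) ≤ tdec G + 2 := by
  induction e with | h u v =>
  have huv : u ≠ v := G.ne_of_adj he
  have hH := hconn.connected_delete_edge_of_not_isBridge hbridge
  have hset := G.edgeSet_deleteEdges {s(u, v)}
  have hcard : 1 < (G.deleteEdges {s(u, v)}).edgeSet.ncard := by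
    have := Set.ncard_sdiff_singleton_add_one he (Set.toFinite _)
    rw [hset]
    omega
  have hnb : ∀ f ∈ (G.deleteEdges {s(u, v)}).edgeSet,
      ∃ g ∈ (G.deleteEdges {s(u, v)}).edgeSet, edgeAdj f g := by
    intro f hf
    obtain ⟨g, hg, hgf⟩ := Set.exists_ne_of_one_lt_ncard hcard f
    exact exists_edgeAdj_of_connected hH hf hg hgf
  have hu := exists_mem_edgeSet_of_connected hH huv
  have hv := exists_mem_edgeSet_of_connected hH huv.symm
  have hnbG : ∀ f ∈ G.edgeSet, ∃ g ∈ G.edgeSet, edgeAdj f g := by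
    intro f hf
    obtain ⟨g, hg, hgf⟩ := Set.exists_ne_of_one_lt_ncard (by omega : 1 < G.edgeSet.ncard) f
    exact exists_edgeAdj_of_connected hconn hf hg hgf
  obtain ⟨c, hc1, hc2, hc3⟩ := tdec_mem G hnbG
  obtain ⟨d, hd1, hd2, hd3⟩ := tdec_mem _ hnb
  constructor
  · rw [Nat.sub_le_iff_le_add]
    obtain ⟨a, ha, hua⟩ := hu
    rw [hset] at ha hd1 hd2 hd3
    obtain ⟨c', hc', hdom⟩ := exists_coloring_of_diff ha.1
      ⟨fun h => ha.2 h.symm, u, Sym2.mem_mk_left u v, hua⟩ ⟨hd1, hd2⟩ hd3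
    exact Nat.sInf_le ⟨c', hc'.1, hc'.2, hdom⟩
  · rw [hset] at hnb hu hv
    obtain ⟨c', hc', hdom⟩ := exists_coloring_diff huv he hnb hu hv ⟨hc1, hc2⟩ hc3
    refine Nat.sInf_le ⟨c', ?_⟩
    rw [IsTDEColoring, hset]
    exact ⟨hc'.1, hc'.2, hdom⟩
end

section
/- Let G be a finite connected simple graph with at least two edges, and let v be a vertex of G that is not a cut vertex, such that the graph G − v (obtained by deleting v and all edges incident to v) is connected and has at least two edges. Then χ'^t_d(G) − deg(v) ≤ χ'^t_d(G − v) ≤ χ'^t_d(G) + deg(v), where deg(v) is the degree of v in G. -/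
/-!
Both inequalities are proved by recolouring. Write `E` for the edges of `G`, `D` for those at `v`
and `E' = E \ D` for the edges of `G - v`. Connectedness and the edge counts enter only through
two facts: every edge of `E'` is adjacent to another edge of `E'`, and every edge of `D` is
adjacent to an edge of `E'`.

*Adding `v` costs at most `deg v` colours* (`exists_tde_add`). If `v` has at least two edges, give
each of them a new private colour; they dominate one another. If `D = {d}`, choose an edge `f` of
`E'` adjacent to `d`, give `d` the colour of `f` and `f` a new private colour. An edge that
dominated the old class of `f` now dominates `{f}`, and so does `d`.

*Deleting `v` costs at most `deg v` colours* (`exists_tde_delete`). A colour class contained in `D`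
is a single edge `d = vu`, since colours at `v` are distinct. Deleting it harms only the edges of
`E'` at `u`, and these can be repaired by giving private colours to two edges of `E'`: two edges at
`u` if there are two, and otherwise a neighbour of the only edge at `u`. This spends two new
colours, and the colour of `d` is freed, so each such `d` costs one colour.

In both cases, an edge that dominated a class containing a newly private edge dominates the
singleton class of that edge.
-/

open SimpleGraph

/-! ### Colourings of edge sets with arbitrary colours -/

/-- A total dominator edge colouring of an edge set `E`, with colours in an arbitrary type. The
nonempty class dominated by `e` is given by a representative `f`. -/
def TDE {V α : Type*} (E : Set (Sym2 V)) (c : Sym2 V → α) : Prop :=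
  (∀ e ∈ E, ∀ f ∈ E, edgeAdj e f → c e ≠ c f) ∧
  (∀ e ∈ E, ∃ f ∈ E, ∀ g ∈ E, c g = c f → edgeAdj e g)

lemma edgeAdj.symm {V : Type*} {e f : Sym2 V} (h : edgeAdj e f) : edgeAdj f e :=
  ⟨h.1.symm, h.2.imp fun _ hx => ⟨hx.2, hx.1⟩⟩

lemma IsTDEColoring.tde {V : Type*} {G : SimpleGraph V} {n : ℕ} {c : Sym2 V → ℕ}
    (h : IsTDEColoring G n c) : TDE G.edgeSet c ∧ (c '' G.edgeSet).ncard ≤ n := by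
  refine ⟨⟨h.2.1, fun e he => ?_⟩, ?_⟩
  · obtain ⟨i, ⟨f, hf, rfl⟩, hi⟩ := h.2.2 e he
    exact ⟨f, hf, hi⟩
  · have hsub : c '' G.edgeSet ⊆ Set.Iio n := by
      rintro _ ⟨e, he, rfl⟩
      exact h.1 e he
    simpa [Set.ncard_eq_toFinset_card'] using Set.ncard_le_ncard hsub (Set.finite_Iio n)

/-- Only the number of colours matters: the colours in use can be relabelled `0, 1, …`. -/
lemma TDE.exists_coloring {V α : Type*} [Finite V] {G : SimpleGraph V} {c : Sym2 V → α} {n : ℕ}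
    (h : TDE G.edgeSet c) (hn : (c '' G.edgeSet).ncard ≤ n) :
    ∃ c' : Sym2 V → ℕ, IsTDEColoring G n c' := by
  classical
  let T := c '' G.edgeSet
  have : Finite T := (Set.toFinite G.edgeSet).image c
  let φ : T ≃ Fin (Nat.card T) := Finite.equivFin T
  let c' : Sym2 V → ℕ := fun e => if he : c e ∈ T then φ ⟨c e, he⟩ else 0
  have hc' : ∀ e (he : e ∈ G.edgeSet), c' e = φ ⟨c e, e, he, rfl⟩ := fun e he =>
    dif_pos (⟨e, he, rfl⟩ : c e ∈ T)
  have hiff : ∀ e ∈ G.edgeSet, ∀ f ∈ G.edgeSet, c' e = c' f ↔ c e = c f := by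
    intro e he f hf
    rw [hc' e he, hc' f hf, Fin.val_inj, φ.apply_eq_iff_eq]
    exact Subtype.mk_eq_mk
  refine ⟨c', fun e he => ?_, fun e he f hf hef => ?_, fun e he => ?_⟩
  · rw [hc' e he]
    exact (φ _).2.trans_le hn
  · rw [Ne, hiff e he f hf]
    exact h.1 e he f hf hef
  · obtain ⟨f, hf, hdom⟩ := h.2 e he
    exact ⟨c' f, ⟨f, hf, rfl⟩, fun g hg hgf => hdom g hg ((hiff g hg f hf).1 hgf)⟩

lemma TDE.tdec_le {V α : Type*} [Finite V] {G : SimpleGraph V} {c : Sym2 V → α} {n : ℕ}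
    (h : TDE G.edgeSet c) (hn : (c '' G.edgeSet).ncard ≤ n) : tdec G ≤ n :=
  Nat.sInf_le (h.exists_coloring hn)

/-- If an edge `ab` had no adjacent edge, `{a, b}` would be closed under adjacency, hence contain
every vertex, and `ab` would be the only edge. -/
lemma exists_edgeAdj {V : Type*} {G : SimpleGraph V} (hconn : G.Connected)
    (hm : 2 ≤ G.edgeSet.ncard) : ∀ e ∈ G.edgeSet, ∃ f ∈ G.edgeSet, edgeAdj e f := by
  intro e he
  by_contra! hno
  have hsame : ∀ f ∈ G.edgeSet, (∃ x, x ∈ e ∧ x ∈ f) → f = e := by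
    intro f hf hx
    by_contra hne
    exact hno f hf ⟨Ne.symm hne, hx⟩
  obtain ⟨a, ha⟩ : ∃ a, a ∈ e := ⟨_, Sym2.out_fst_mem e⟩
  have hall : ∀ x, x ∈ e := by
    intro x
    have hr := (SimpleGraph.reachable_iff_reflTransGen a x).1 (hconn.preconnected a x)
    induction hr with
    | refl => exact ha
    | tail _ hbc ih =>
      rename_i b c _
      rw [← hsame s(b, c) hbc ⟨b, ih, Sym2.mem_mk_left b c⟩]
      exact Sym2.mem_mk_right b c
  have hsub : G.edgeSet ⊆ {e} := fun f hf =>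
    hsame f hf ⟨_, hall _, Sym2.out_fst_mem f⟩
  have := Set.ncard_le_ncard hsub
  rw [Set.ncard_singleton] at this
  omega

/-- The minimum defining `tdec` is attained: giving every edge its own colour is a
total dominator edge colouring, so the set of admissible numbers of colours is nonempty. -/
lemma exists_tde_tdec {V : Type*} [Finite V] {G : SimpleGraph V} (hconn : G.Connected)
    (hm : 2 ≤ G.edgeSet.ncard) :
    ∃ c : Sym2 V → ℕ, TDE G.edgeSet c ∧ (c '' G.edgeSet).ncard ≤ tdec G := by
  have hid : TDE G.edgeSet (id : Sym2 V → Sym2 V) := by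
    refine ⟨fun e _ f _ h => h.1, fun e he => ?_⟩
    obtain ⟨f, hf, hef⟩ := exists_edgeAdj hconn hm e he
    refine ⟨f, hf, ?_⟩
    rintro g _ rfl
    exact hef
  have hne : {n | ∃ c : Sym2 V → ℕ, IsTDEColoring G n c}.Nonempty :=
    ⟨_, hid.exists_coloring le_rfl⟩
  obtain ⟨c, hc⟩ := Nat.sInf_mem hne
  exact ⟨c, hc.tde⟩

/-! ### Transport along injective vertex maps -/

lemma edgeAdj_map {V W : Type*} {φ : V → W} (hφ : Function.Injective φ) {e f : Sym2 V} :
    edgeAdj (Sym2.map φ e) (Sym2.map φ f) ↔ edgeAdj e f := by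
  unfold edgeAdj
  rw [Ne, (Sym2.map.injective hφ).eq_iff]
  refine and_congr_right fun _ => ⟨?_, ?_⟩
  · rintro ⟨x, hx, hy⟩
    obtain ⟨a, ha, rfl⟩ := Sym2.mem_map.1 hx
    obtain ⟨b, hb, hab⟩ := Sym2.mem_map.1 hy
    obtain rfl := hφ hab
    exact ⟨_, ha, hb⟩
  · rintro ⟨x, hx, hy⟩
    exact ⟨φ x, Sym2.mem_map.2 ⟨x, hx, rfl⟩, Sym2.mem_map.2 ⟨x, hy, rfl⟩⟩

lemma tde_image {V W α : Type*} {φ : V → W} (hφ : Function.Injective φ) {E : Set (Sym2 V)}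
    {c : Sym2 W → α} : TDE (Sym2.map φ '' E) c ↔ TDE E (c ∘ Sym2.map φ) := by
  simp only [TDE, Set.forall_mem_image, Set.exists_mem_image, edgeAdj_map hφ, Function.comp]

/-! ### Adding the edges at a vertex -/

/-- Adding the edges `D` to `E'` costs at most `|D|` colours. -/
lemma exists_tde_add {V : Type*} [Finite V] {E' D : Set (Sym2 V)} (hdisj : ∀ e ∈ E', e ∉ D)
    (hDD : ∀ d ∈ D, ∀ d' ∈ D, d ≠ d' → edgeAdj d d')
    (hDE : ∀ d ∈ D, ∃ f ∈ E', edgeAdj d f)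
    (htr : ∀ d ∈ D, ∀ e ∈ E', ∀ f ∈ E', edgeAdj d e → edgeAdj d f → e ≠ f → edgeAdj e f)
    {c : Sym2 V → ℕ} (hc : TDE E' c) :
    ∃ c' : Sym2 V → ℕ ⊕ Sym2 V, TDE (E' ∪ D) c' ∧
      (c' '' (E' ∪ D)).ncard ≤ (c '' E').ncard + D.ncard := by
  classical
  have hcount : ∀ (c' : Sym2 V → ℕ ⊕ Sym2 V) (S : Set (Sym2 V)), S.ncard ≤ D.ncard →
      c' '' (E' ∪ D) ⊆ Sum.inl '' (c '' E') ∪ Sum.inr '' S →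
      (c' '' (E' ∪ D)).ncard ≤ (c '' E').ncard + D.ncard := by
    intro c' S hS hsub
    calc _ ≤ _ := Set.ncard_le_ncard hsub (Set.toFinite _)
      _ ≤ _ := Set.ncard_union_le _ _
      _ ≤ (c '' E').ncard + S.ncard :=
        add_le_add (Set.ncard_image_le (Set.toFinite _)) (Set.ncard_image_le (Set.toFinite _))
      _ ≤ _ := by omega
  by_cases hD : ∀ d ∈ D, ∃ d' ∈ D, d ≠ d'
  · let c' : Sym2 V → ℕ ⊕ Sym2 V := fun e => if e ∈ D then Sum.inr e else Sum.inl (c e)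
    have h1 : ∀ e ∈ D, c' e = Sum.inr e := fun e he => if_pos he
    have h2 : ∀ e ∈ E', c' e = Sum.inl (c e) := fun e he => if_neg (hdisj e he)
    refine ⟨c', ⟨?_, ?_⟩, hcount c' D le_rfl ?_⟩
    · rintro e (he | he) f (hf | hf) hef
      · rw [h2 e he, h2 f hf]
        simpa using hc.1 e he f hf hef
      · simp [h2 e he, h1 f hf]
      · simp [h1 e he, h2 f hf]
      · simpa [h1 e he, h1 f hf] using hef.1
    · rintro e (he | he)
      · obtain ⟨f, hf, hdom⟩ := hc.2 e he
        refine ⟨f, Or.inl hf, ?_⟩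
        rintro g (hg | hg) hgf
        · rw [h2 g hg, h2 f hf, Sum.inl.injEq] at hgf
          exact hdom g hg hgf
        · simp [h1 g hg, h2 f hf] at hgf
      · obtain ⟨d, hd, hne⟩ := hD e he
        refine ⟨d, Or.inr hd, ?_⟩
        rintro g (hg | hg) hgd
        · simp [h2 g hg, h1 d hd] at hgd
        · rw [h1 g hg, h1 d hd, Sum.inr.injEq] at hgd
          exact hgd ▸ hDD e he d hd hne
    · rintro _ ⟨e, he | he, rfl⟩
      · exact Or.inl ⟨c e, ⟨e, he, rfl⟩, (h2 e he).symm⟩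
      · exact Or.inr ⟨e, he, (h1 e he).symm⟩
  · push Not at hD
    obtain ⟨d, hd, hD1⟩ := hD
    obtain ⟨f, hf, hdf⟩ := hDE d hd
    -- The only edge of `D` inherits the colour of `f`, and `f` becomes a class of its own.
    let c' : Sym2 V → ℕ ⊕ Sym2 V := fun e =>
      if e = f then Sum.inr f else if e = d then Sum.inl (c f) else Sum.inl (c e)
    have hcf : c' f = Sum.inr f := if_pos rfl
    have hcd : c' d = Sum.inl (c f) := by simp [c', hdf.1]
    have hce : ∀ e ∈ E', e ≠ f → c' e = Sum.inl (c e) := by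
      intro e he hne
      have : e ≠ d := fun h => hdisj e he (h ▸ hd)
      simp [c', hne, this]
    have hmem : ∀ e ∈ E' ∪ D, e = f ∨ e = d ∨ (e ∈ E' ∧ e ≠ f) := by
      rintro e (he | he)
      · by_cases h : e = f
        · exact Or.inl h
        · exact Or.inr (Or.inr ⟨he, h⟩)
      · exact Or.inr (Or.inl (hD1 e he).symm)
    have hfcls : ∀ g ∈ E' ∪ D, c' g = c' f → g = f := by
      intro g hg hgf
      rcases hmem g hg with rfl | rfl | ⟨h, hne⟩
      · rfl
      · simp [hcf, hcd] at hgf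
      · simp [hcf, hce g h hne] at hgf
    -- An edge adjacent to `d` differs in old colour from `f`, being equal or adjacent to `f`.
    have hdprop : ∀ e ∈ E', e ≠ f → edgeAdj d e → c f ≠ c e := fun e he hne hde =>
      hc.1 f hf e he (htr d hd f hf e he hdf hde (Ne.symm hne))
    have hprop : ∀ e ∈ E' ∪ D, ∀ g ∈ E' ∪ D, edgeAdj e g → c' e ≠ c' g := by
      intro e he g hg heg heq
      rcases hmem e he with rfl | rfl | ⟨h, hne⟩
      · exact heg.1 (hfcls g hg heq.symm).symm
      · rcases hmem g hg with rfl | rfl | ⟨h', hne'⟩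
        · exact heg.1 (hfcls _ he heq)
        · exact heg.1 rfl
        · rw [hcd, hce g h' hne', Sum.inl.injEq] at heq
          exact hdprop g h' hne' heg heq
      · rcases hmem g hg with rfl | rfl | ⟨h', hne'⟩
        · exact heg.1 (hfcls _ he heq)
        · rw [hcd, hce e h hne, Sum.inl.injEq] at heq
          exact hdprop e h hne heg.symm heq.symm
        · rw [hce e h hne, hce g h' hne', Sum.inl.injEq] at heq
          exact hc.1 e h g h' heg heq
    refine ⟨c', ⟨hprop, ?_⟩, hcount c' {f} ?_ ?_⟩
    · rintro e (he | he)
      · obtain ⟨a, ha, hdom⟩ := hc.2 e he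
        by_cases haf : c a = c f
        · refine ⟨f, Or.inl hf, fun g hg hgf => ?_⟩
          rw [hfcls g hg hgf]
          exact hdom f hf haf.symm
        · have hane : a ≠ f := fun h => haf (h ▸ rfl)
          refine ⟨a, Or.inl ha, fun g hg hga => ?_⟩
          rw [hce a ha hane] at hga
          rcases hmem g hg with rfl | rfl | ⟨h, hne⟩
          · simp [hcf] at hga
          · rw [hcd, Sum.inl.injEq] at hga
            exact absurd hga.symm haf
          · rw [hce g h hne, Sum.inl.injEq] at hga
            exact hdom g h hga
      · obtain rfl := hD1 e he
        refine ⟨f, Or.inl hf, fun g hg hgf => ?_⟩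
        rw [hfcls g hg hgf]
        exact hdf
    · rw [Set.ncard_singleton]
      exact (Set.ncard_pos (Set.toFinite _)).2 ⟨d, hd⟩
    · rintro _ ⟨e, he, rfl⟩
      rcases hmem e he with rfl | rfl | ⟨h, hne⟩
      · exact Or.inr ⟨_, rfl, hcf.symm⟩
      · exact Or.inl ⟨c f, ⟨f, hf, rfl⟩, hcd.symm⟩
      · exact Or.inl ⟨c e, ⟨e, h, rfl⟩, (hce e h hne).symm⟩

/-! ### Deleting the edges at a vertex -/

/-- Deleting the edges `D` from `E' ∪ D` costs at most `|D|` colours. -/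
lemma exists_tde_delete {V : Type*} [Finite V] {E' D : Set (Sym2 V)} (hdisj : ∀ e ∈ E', e ∉ D)
    (hDD : ∀ d ∈ D, ∀ d' ∈ D, d ≠ d' → edgeAdj d d')
    (hEE : ∀ e ∈ E', ∃ f ∈ E', edgeAdj e f)
    (hDE : ∀ d ∈ D, ∃ f ∈ E', edgeAdj d f)
    (htr : ∀ d ∈ D, ∀ e ∈ E', ∀ f ∈ E', edgeAdj d e → edgeAdj d f → e ≠ f → edgeAdj e f)
    {c : Sym2 V → ℕ} (hc : TDE (E' ∪ D) c) :
    ∃ c' : Sym2 V → ℕ ⊕ Sym2 V, TDE E' c' ∧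
      (c' '' E').ncard ≤ (c '' (E' ∪ D)).ncard + D.ncard := by
  classical
  -- `B` consists of the edges of `D` that form a colour class on their own.
  let B : Set (Sym2 V) := {d | d ∈ D ∧ ∀ f ∈ E' ∪ D, c f = c d → f = d}
  have hpq : ∀ d, ∃ p q, d ∈ B → p ∈ E' ∧ q ∈ E' ∧
      ∀ e ∈ E', edgeAdj e d → edgeAdj e p ∨ edgeAdj e q := by
    intro d
    by_cases hd : d ∈ D
    · obtain ⟨f, hf, hdf⟩ := hDE d hd
      by_cases hg : ∃ g ∈ E', edgeAdj d g ∧ g ≠ f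
      · obtain ⟨g, hg, hdg, hne⟩ := hg
        refine ⟨f, g, fun _ => ⟨hf, hg, fun e he hed => ?_⟩⟩
        by_cases hef : e = f
        · right
          exact htr d hd e he g hg hed.symm hdg (hef ▸ hne.symm)
        · left
          exact htr d hd e he f hf hed.symm hdf hef
      · push Not at hg
        obtain ⟨p, hp, hfp⟩ := hEE f hf
        refine ⟨p, p, fun _ => ⟨hp, hp, fun e he hed => Or.inl ?_⟩⟩
        rw [hg e he hed.symm]
        exact hfp
    · exact ⟨d, d, fun h => absurd h.1 hd⟩
  choose p q hpq using hpq
  let S : Set (Sym2 V) := p '' B ∪ q '' B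
  let c' : Sym2 V → ℕ ⊕ Sym2 V := fun e => if e ∈ S then Sum.inr e else Sum.inl (c e)
  have h1 : ∀ e ∈ S, c' e = Sum.inr e := fun e he => if_pos he
  have h2 : ∀ e ∉ S, c' e = Sum.inl (c e) := fun e he => if_neg he
  have hSE : S ⊆ E' := by
    rintro _ (⟨d, hd, rfl⟩ | ⟨d, hd, rfl⟩)
    · exact (hpq d hd).1
    · exact (hpq d hd).2.1
  have hcc : ∀ e f, c' e = c' f → c e = c f := by
    intro e f h
    by_cases he : e ∈ S <;> by_cases hf : f ∈ S <;> simp_all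
  have hScls : ∀ s ∈ S, ∀ g, c' g = c' s → g = s := by
    intro s hs g h
    by_cases hg : g ∈ S
    · simpa [h1 s hs, h1 g hg] using h
    · simp [h1 s hs, h2 g hg] at h
  refine ⟨c', ⟨?_, ?_⟩, ?_⟩
  · intro e he f hf hef h
    exact hc.1 e (Or.inl he) f (Or.inl hf) hef (hcc e f h)
  · intro e he
    have hS : ∀ s ∈ S, edgeAdj e s → ∃ f ∈ E', ∀ g ∈ E', c' g = c' f → edgeAdj e g :=
      fun s hs hes => ⟨s, hSE hs, fun g _ h => hScls s hs g h ▸ hes⟩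
    obtain ⟨a, ha, hdom⟩ := hc.2 e (Or.inl he)
    by_cases hg : ∃ g ∈ E', c g = c a
    · obtain ⟨g, hg, hga⟩ := hg
      exact ⟨g, hg, fun k hk h => hdom k (Or.inl hk) ((hcc k g h).trans hga)⟩
    · push Not at hg
      have haD : a ∈ D := ha.resolve_left fun h => hg a h rfl
      have haB : a ∈ B := by
        refine ⟨haD, ?_⟩
        rintro f (hf | hf) hfa
        · exact absurd hfa (hg f hf)
        · by_contra hne
          exact hc.1 f (Or.inr hf) a ha (hDD f hf a haD hne) hfa
      rcases (hpq a haB).2.2 e he (hdom a ha rfl) with h | h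
      · exact hS _ (Or.inl ⟨a, haB, rfl⟩) h
      · exact hS _ (Or.inr ⟨a, haB, rfl⟩) h
  · have hsub : c' '' E' ⊆ Sum.inl '' (c '' E') ∪ Sum.inr '' S := by
      rintro _ ⟨e, he, rfl⟩
      by_cases hs : e ∈ S
      · exact Or.inr ⟨e, hs, (h1 e hs).symm⟩
      · exact Or.inl ⟨c e, ⟨e, he, rfl⟩, (h2 e hs).symm⟩
    have hScard : S.ncard ≤ B.ncard + B.ncard :=
      (Set.ncard_union_le _ _).trans
        (add_le_add (Set.ncard_image_le (Set.toFinite _)) (Set.ncard_image_le (Set.toFinite _)))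
    have hBD : B.ncard ≤ D.ncard := Set.ncard_le_ncard (fun _ h => h.1) (Set.toFinite _)
    -- The colours of `B` are not used on `E'`.
    have hfree : (c '' E').ncard + B.ncard ≤ (c '' (E' ∪ D)).ncard := by
      have hinj : Set.InjOn c B := fun a ha b hb h => hb.2 a (Or.inr ha.1) h
      have hd : Disjoint (c '' E') (c '' B) := by
        rw [Set.disjoint_left]
        rintro _ ⟨e, he, rfl⟩ ⟨b, hb, h⟩
        exact hdisj e he (hb.2 e (Or.inl he) h.symm ▸ hb.1)
      rw [← hinj.ncard_image,
        ← Set.ncard_union_eq hd (Set.toFinite _) (Set.toFinite _), ← Set.image_union]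
      exact Set.ncard_le_ncard
        (Set.image_mono (Set.union_subset_union_right _ fun _ h => h.1)) (Set.toFinite _)
    have hle : (c' '' E').ncard ≤ (c '' E').ncard + S.ncard :=
      (Set.ncard_le_ncard hsub (Set.toFinite _)).trans <| (Set.ncard_union_le _ _).trans
        (add_le_add (Set.ncard_image_le (Set.toFinite _)) (Set.ncard_image_le (Set.toFinite _)))
    omega

/-! ### The vertex-deleted graph -/

lemma image_edgeSet_induce {V : Type*} (G : SimpleGraph V) (v : V) :
    Sym2.map Subtype.val '' (G.induce {u | u ≠ v}).edgeSet = {e | e ∈ G.edgeSet ∧ v ∉ e} := by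
  ext e
  constructor
  · rintro ⟨e, he, rfl⟩
    induction e with
    | _ a b =>
      refine ⟨he, ?_⟩
      rw [Sym2.map_mk, Sym2.mem_iff]
      rintro (h | h)
      · exact a.2 h.symm
      · exact b.2 h.symm
  · induction e with
    | _ a b =>
      rintro ⟨he, hv⟩
      rw [Sym2.mem_iff, not_or] at hv
      exact ⟨s(⟨a, Ne.symm hv.1⟩, ⟨b, Ne.symm hv.2⟩), he, rfl⟩

/-- Vertex removal: if `v` is not a cut vertex of the connected graph `G` (so
`G − v` is connected), then
χ'ᵗ_d(G) − deg(v) ≤ χ'ᵗ_d(G − v) ≤ χ'ᵗ_d(G) + deg(v). -/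
theorem tdec_deleteVertex {V : Type*} [Fintype V] (G : SimpleGraph V)
    [DecidableRel G.Adj] (hconn : G.Connected) (hm : 2 ≤ G.edgeSet.ncard)
    (v : V) (hconn' : (G.induce {u | u ≠ v}).Connected)
    (hm' : 2 ≤ (G.induce {u | u ≠ v}).edgeSet.ncard) :
    tdec G - G.degree v ≤ tdec (G.induce {u | u ≠ v}) ∧
    tdec (G.induce {u | u ≠ v}) ≤ tdec G + G.degree v := by
  classical
  let H := G.induce {u | u ≠ v}
  let E' : Set (Sym2 V) := {e | e ∈ G.edgeSet ∧ v ∉ e}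
  let D : Set (Sym2 V) := {e | e ∈ G.edgeSet ∧ v ∈ e}
  let φ : Sym2 {u | u ≠ v} → Sym2 V := Sym2.map Subtype.val
  have hφ : Function.Injective φ := Sym2.map.injective Subtype.val_injective
  have hE' : φ '' H.edgeSet = E' := image_edgeSet_induce G v
  have hE : E' ∪ D = G.edgeSet := by
    ext e
    by_cases hv : v ∈ e <;> simp [E', D, hv]
  have hD : D.ncard = G.degree v := by
    rw [← G.card_incidenceSet_eq_degree v, ← Nat.card_eq_fintype_card]
    rfl
  have hdisj : ∀ e ∈ E', e ∉ D := fun e he hd => he.2 hd.2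
  have hDD : ∀ d ∈ D, ∀ d' ∈ D, d ≠ d' → edgeAdj d d' := fun d hd d' hd' hne =>
    ⟨hne, v, hd.2, hd'.2⟩
  have hEE : ∀ e ∈ E', ∃ f ∈ E', edgeAdj e f := by
    rw [← hE']
    rintro _ ⟨e, he, rfl⟩
    obtain ⟨f, hf, hef⟩ := exists_edgeAdj hconn' hm' e he
    exact ⟨φ f, ⟨f, hf, rfl⟩, (edgeAdj_map Subtype.val_injective).2 hef⟩
  have hDform : ∀ d ∈ D, ∃ u, G.Adj v u ∧ d = s(v, u) := by
    rintro d ⟨hd, hv⟩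
    obtain ⟨u, rfl⟩ := Sym2.mem_iff_exists.1 hv
    exact ⟨u, hd, rfl⟩
  have hDE : ∀ d ∈ D, ∃ f ∈ E', edgeAdj d f := by
    intro d hd
    obtain ⟨u, hvu, rfl⟩ := hDform d hd
    have hnt : Nontrivial {u | u ≠ v} := by
      by_contra hn
      rw [not_nontrivial_iff_subsingleton] at hn
      have : H.edgeSet = ∅ := by
        rw [Subsingleton.elim H ⊥, SimpleGraph.edgeSet_bot]
      rw [this, Set.ncard_empty] at hm'
      omega
    obtain ⟨w, hw⟩ := hconn'.preconnected.exists_adj_of_nontrivial ⟨u, hvu.ne'⟩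
    have hf : s(u, w.1) ∈ E' := by
      rw [← hE']
      exact ⟨s(⟨u, hvu.ne'⟩, w), hw, rfl⟩
    exact ⟨_, hf, fun h => hf.2 (h ▸ hd.2), u, by simp, by simp⟩
  -- Two edges avoiding `v` and adjacent to `vu` both contain `u`.
  have htr : ∀ d ∈ D, ∀ e ∈ E', ∀ f ∈ E', edgeAdj d e → edgeAdj d f → e ≠ f →
      edgeAdj e f := by
    intro d hd e he f hf hde hdf hne
    obtain ⟨u, -, rfl⟩ := hDform d hd
    have hu : ∀ g ∈ E', edgeAdj s(v, u) g → u ∈ g := by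
      rintro g hg ⟨-, x, hx, hxg⟩
      rcases Sym2.mem_iff.1 hx with rfl | rfl
      · exact absurd hxg hg.2
      · exact hxg
    exact ⟨hne, u, hu e he hde, hu f hf hdf⟩
  constructor
  · obtain ⟨c, hc, hcard⟩ := exists_tde_tdec hconn' hm'
    have hext : Function.extend φ c 0 ∘ φ = c := funext fun e => hφ.extend_apply c 0 e
    have hc0 : TDE E' (Function.extend φ c 0) := by
      rw [← hE', tde_image Subtype.val_injective]
      exact hext.symm ▸ hc
    have hcard0 : (Function.extend φ c 0 '' E').ncard ≤ tdec H := by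
      rw [← hE', ← Set.image_comp, hext]
      exact hcard
    obtain ⟨c', hc', hle⟩ := exists_tde_add hdisj hDD hDE htr hc0
    rw [hE] at hc' hle
    have : tdec G ≤ tdec H + G.degree v := hc'.tdec_le (by omega)
    exact Nat.sub_le_iff_le_add.2 this
  · obtain ⟨c, hc, hcard⟩ := exists_tde_tdec hconn hm
    rw [← hE] at hc hcard
    obtain ⟨c', hc', hle⟩ := exists_tde_delete hdisj hDD hEE hDE htr hc
    rw [← hE'] at hc'
    refine ((tde_image Subtype.val_injective).1 hc').tdec_le ?_
    rw [Set.image_comp]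
    change (c' '' (φ '' H.edgeSet)).ncard ≤ _
    rw [hE']
    omega
end

section
/- Let G be a finite simple graph with m ≥ 1 edges and let k ≥ 3. Then χ'^t_d(G^{1/k}) ≥ m, where G^{1/k} is the k-subdivision of G. -/
/-!
Each edge `e` of `G` gives an inner edge of its subdivided path, joining the first two inner
vertices. Both of its endpoints lie in the interior of that path, so a color class all of whose
edges are adjacent to it consists of edges meeting the interior of the path of `e`. No edge of the
subdivision meets the interiors of two different paths, hence the nonempty classes dominating the
inner edges of distinct paths are distinct, and at least `m` colors are used
(`ncard_le_of_isTDEColoring`).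

Since `tdec` is an infimum of a set of naturals, which would be `0` for the empty set, one also
needs that some coloring exists (`exists_isTDEColoring`): coloring all edges differently works,
because every edge of the subdivision has an adjacent edge.
-/

open SimpleGraph

/-- The k-subdivision of `G`: each edge `e` of `G` (with chosen endpoints
`(Quot.out e.1).1` and `(Quot.out e.1).2`) is replaced by a path of length `k`
through `k - 1` new internal vertices. For `k = 1` this is `G` itself. -/
noncomputable def subdivision {V : Type*} (G : SimpleGraph V) (k : ℕ) :
    SimpleGraph (V ⊕ (G.edgeSet × Fin (k - 1))) :=
  SimpleGraph.fromRel (fun x y =>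
    match x, y with
    | .inl v, .inl w => k = 1 ∧ G.Adj v w
    | .inl v, .inr (e, i) =>
        (v = (Quot.out e.1).1 ∧ (i : ℕ) = 0) ∨
        (v = (Quot.out e.1).2 ∧ (i : ℕ) = k - 2)
    | .inr _, .inl _ => False
    | .inr (e, i), .inr (f, j) => e = f ∧ (j : ℕ) = (i : ℕ) + 1)

/-- No edge of the subdivision joins the interiors of two different paths. -/
lemma subdivision_inner_eq {V : Type*} {G : SimpleGraph V} {k : ℕ} {e e' : G.edgeSet}
    {i j : Fin (k - 1)} (h : (subdivision G k).Adj (.inr (e, i)) (.inr (e', j))) : e = e' := by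
  simp only [subdivision, SimpleGraph.fromRel_adj] at h
  rcases h.2 with h | h
  · exact h.1
  · exact h.1.symm

lemma subdivision_succ_adj {V : Type*} {G : SimpleGraph V} {k : ℕ} (e : G.edgeSet)
    {i j : Fin (k - 1)} (h : (j : ℕ) = i + 1) :
    (subdivision G k).Adj (.inr (e, i)) (.inr (e, j)) := by
  simp only [subdivision, SimpleGraph.fromRel_adj]
  refine ⟨?_, Or.inl ⟨trivial, h⟩⟩
  intro h'
  simp only [Sum.inr.injEq, Prod.mk.injEq, true_and] at h'
  subst h'
  omega

/-- Every inner vertex has two distinct neighbors, namely its predecessor and its successor on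
the path. -/
lemma subdivision_two_neighbors {V : Type*} {G : SimpleGraph V} {k : ℕ} (hk : 3 ≤ k)
    (e : G.edgeSet) (i : Fin (k - 1)) :
    ∃ a b, a ≠ b ∧ (subdivision G k).Adj (.inr (e, i)) a ∧
      (subdivision G k).Adj (.inr (e, i)) b := by
  have hi := i.2
  have first (h : (i : ℕ) = 0) :
      (subdivision G k).Adj (.inr (e, i)) (.inl (Quot.out e.1).1) := by
    simp [subdivision, h]
  have last (h : (i : ℕ) = k - 2) :
      (subdivision G k).Adj (.inr (e, i)) (.inl (Quot.out e.1).2) := by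
    simp [subdivision, h]
  have prev (h : (i : ℕ) ≠ 0) :
      (subdivision G k).Adj (.inr (e, i)) (.inr (e, ⟨i - 1, by omega⟩)) :=
    (subdivision_succ_adj e (by simp only; omega)).symm
  have next (h : (i : ℕ) ≠ k - 2) :
      (subdivision G k).Adj (.inr (e, i)) (.inr (e, ⟨i + 1, by omega⟩)) :=
    subdivision_succ_adj e rfl
  by_cases h0 : (i : ℕ) = 0
  · exact ⟨_, _, by simp, first h0, next (by omega)⟩
  · by_cases h1 : (i : ℕ) = k - 2
    · exact ⟨_, _, by simp, prev h0, last h1⟩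
    · exact ⟨_, _, by simp, prev h0, next h1⟩

lemma exists_edgeAdj_of_inner {V : Type*} {G : SimpleGraph V} {k : ℕ} (hk : 3 ≤ k)
    (e : G.edgeSet) (i : Fin (k - 1)) (y : V ⊕ (G.edgeSet × Fin (k - 1))) :
    ∃ f ∈ (subdivision G k).edgeSet, edgeAdj s(.inr (e, i), y) f := by
  obtain ⟨a, b, hab, ha, hb⟩ := subdivision_two_neighbors hk e i
  by_cases hy : y = a
  · exact ⟨s(.inr (e, i), b), hb, fun h => hab (hy ▸ Sym2.congr_right.1 h), .inr (e, i),
      Sym2.mem_mk_left _ _, Sym2.mem_mk_left _ _⟩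
  · exact ⟨s(.inr (e, i), a), ha, fun h => hy (Sym2.congr_right.1 h), .inr (e, i),
      Sym2.mem_mk_left _ _, Sym2.mem_mk_left _ _⟩

lemma exists_edgeAdj_s16 {V : Type*} {G : SimpleGraph V} {k : ℕ} (hk : 3 ≤ k) :
    ∀ d ∈ (subdivision G k).edgeSet, ∃ f ∈ (subdivision G k).edgeSet, edgeAdj d f := by
  intro d hd
  induction d with
  | _ x y =>
    rcases x with u | ⟨e, i⟩
    · rcases y with v | ⟨e, i⟩
      · -- Two original vertices are joined only when `k = 1`.
        simp only [subdivision, SimpleGraph.mem_edgeSet, SimpleGraph.fromRel_adj] at hd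
        omega
      · rw [Sym2.eq_swap]
        exact exists_edgeAdj_of_inner hk e i _
    · exact exists_edgeAdj_of_inner hk e i _

lemma exists_isTDEColoring {V : Type*} [Finite V] (G : SimpleGraph V) {k : ℕ} (hk : 3 ≤ k) :
    ∃ n c, IsTDEColoring (subdivision G k) n c := by
  obtain ⟨n, ⟨φ⟩⟩ := Finite.exists_equiv_fin (Sym2 (V ⊕ (G.edgeSet × Fin (k - 1))))
  have inj {a b} (h : (φ a : ℕ) = φ b) : a = b := φ.injective (Fin.ext h)
  refine ⟨n, fun d => φ d, fun d _ => (φ d).2, fun d _ f _ h h' => h.1 (inj h'), ?_⟩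
  intro d hd
  obtain ⟨f, hf, hdf⟩ := exists_edgeAdj_s16 hk d hd
  exact ⟨φ f, ⟨f, hf, rfl⟩, fun g _ h => inj h ▸ hdf⟩

lemma ncard_le_of_isTDEColoring {V : Type*} [Finite V] (G : SimpleGraph V) {k : ℕ} (hk : 3 ≤ k)
    {n : ℕ} {c : Sym2 (V ⊕ (G.edgeSet × Fin (k - 1))) → ℕ}
    (h : IsTDEColoring (subdivision G k) n c) : G.edgeSet.ncard ≤ n := by
  obtain ⟨hlt, -, hdom⟩ := h
  have key (e : G.edgeSet) : ∃ i : Fin n, (∃ f ∈ (subdivision G k).edgeSet, c f = i) ∧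
      ∀ f ∈ (subdivision G k).edgeSet, c f = i → ∃ j, Sum.inr (e, j) ∈ f := by
    obtain ⟨i, ⟨f, hf, rfl⟩, hi⟩ := hdom
      s(.inr (e, ⟨0, by omega⟩), .inr (e, ⟨1, by omega⟩)) (subdivision_succ_adj e rfl)
    refine ⟨⟨c f, hlt f hf⟩, ⟨f, hf, rfl⟩, fun g hg hc => ?_⟩
    obtain ⟨-, v, hv, hvg⟩ := hi g hg hc
    rcases Sym2.mem_iff.1 hv with rfl | rfl
    · exact ⟨_, hvg⟩
    · exact ⟨_, hvg⟩
  choose col hne hcol using key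
  have hinj : Function.Injective col := by
    intro e e' hee
    obtain ⟨f, hf, hc⟩ := hne e
    obtain ⟨j, hj⟩ := hcol e f hf hc
    obtain ⟨j', hj'⟩ := hcol e' f hf (hee ▸ hc)
    by_contra hne'
    have hv : (Sum.inr (e, j) : V ⊕ (G.edgeSet × Fin (k - 1))) ≠ Sum.inr (e', j') := by
      intro h
      exact hne' (Prod.mk.inj (Sum.inr.inj h)).1
    rw [(Sym2.mem_and_mem_iff hv).1 ⟨hj, hj'⟩] at hf
    exact hne' (subdivision_inner_eq hf)
  simpa using Nat.card_le_card_of_injective col hinj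

/-- If G has m ≥ 1 edges and k ≥ 3, then χ'ᵗ_d(G^{1/k}) ≥ m. -/
theorem tdec_subdivision_ge {V : Type*} [Fintype V] (G : SimpleGraph V)
    (hm : 1 ≤ G.edgeSet.ncard) (k : ℕ) (hk : 3 ≤ k) :
    G.edgeSet.ncard ≤ tdec (subdivision G k) := by
  obtain ⟨n, hn⟩ := exists_isTDEColoring G hk
  obtain ⟨c, hc⟩ := Nat.sInf_mem (s := {n | ∃ c, IsTDEColoring (subdivision G k) n c}) ⟨n, hn⟩
  exact ncard_le_of_isTDEColoring G hk hc
end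

section
/- For every integer n ≥ 3, the 3-subdivision of the star graph K_{1,n} satisfies χ'^t_d(K_{1,n}^{1/3}) = 2n. -/
/-!
In the 3-subdivision of a graph `G` each edge `e` becomes a path of three edges: a middle edge and
two end edges. Colouring both end edges of `e` with one colour and the middle edge with another,
with disjoint palettes for distinct `e`, gives a TDE-coloring with `2 * |E(G)|` colours: an end edge
is dominated by the class of its middle edge, and a middle edge by the class of its two end edges.

If every edge of `G` has an endpoint of degree one, as in a star, this is optimal. The end edge at
the leaf has the middle edge as its only neighbour, so every middle edge is alone in its class
(`c_middle_unique`). The middle edge of `e` is itself dominated by a class contained in the set of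
the two end edges of `e`. These `2 * |E(G)|` classes are nonempty and pairwise disjoint
(`two_mul_card_le`).
-/

open SimpleGraph

section Subdivision

variable {V : Type*} (G : SimpleGraph V)

/-- The edges of the 3-subdivision: `i = 0, 1, 2` are the three consecutive edges of the path that
replaces `e`, so `i = 1` is the middle edge and `i = 0, 2` are the end edges. -/
noncomputable def subEdge (x : G.edgeSet × Fin 3) : Sym2 (V ⊕ (G.edgeSet × Fin (3 - 1))) :=
  match x with
  | (e, 0) => s(.inl (Quot.out e.1).1, .inr (e, 0))
  | (e, 1) => s(.inr (e, 0), .inr (e, 1))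
  | (e, 2) => s(.inl (Quot.out e.1).2, .inr (e, 1))

lemma out_fst_ne_snd (e : G.edgeSet) : (Quot.out e.1).1 ≠ (Quot.out e.1).2 := by
  have h : Sym2.mk (Quot.out e.1).1 (Quot.out e.1).2 ∈ G.edgeSet := by
    have : Sym2.mk (Quot.out e.1).1 (Quot.out e.1).2 = e.1 := Quot.out_eq e.1
    rw [this]; exact e.2
  exact G.ne_of_adj h

lemma mem_iff_out (e : G.edgeSet) (v : V) :
    v ∈ e.1 ↔ v = (Quot.out e.1).1 ∨ v = (Quot.out e.1).2 := by
  have : Sym2.mk (Quot.out e.1).1 (Quot.out e.1).2 = e.1 := Quot.out_eq e.1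
  conv_lhs => rw [← this]
  exact Sym2.mem_iff

lemma subEdge_injective : Function.Injective (subEdge G) := by
  rintro ⟨e, i⟩ ⟨f, j⟩ h
  fin_cases i <;> fin_cases j <;> simp_all [subEdge]

lemma mem_edgeSet_subdivision_iff (f : Sym2 (V ⊕ (G.edgeSet × Fin (3 - 1)))) :
    f ∈ (subdivision G 3).edgeSet ↔ ∃ x, subEdge G x = f := by
  constructor
  · induction f with
    | _ a b =>
      intro h
      rw [SimpleGraph.mem_edgeSet, subdivision, SimpleGraph.fromRel_adj] at h
      replace h := h.2
      rcases a with v | ⟨e, i⟩ <;> rcases b with w | ⟨f, j⟩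
      · simp at h
      · rcases h with (⟨rfl, hj⟩ | ⟨rfl, hj⟩) | h
        · exact ⟨(f, 0), by rw [show j = 0 from Fin.ext hj]; rfl⟩
        · exact ⟨(f, 2), by rw [show j = 1 from Fin.ext hj]; rfl⟩
        · exact h.elim
      · rw [Sym2.eq_swap]
        rcases h with h | ⟨rfl, hi⟩ | ⟨rfl, hi⟩
        · exact h.elim
        · exact ⟨(e, 0), by rw [show i = 0 from Fin.ext hi]; rfl⟩
        · exact ⟨(e, 2), by rw [show i = 1 from Fin.ext hi]; rfl⟩
      · rcases h with ⟨rfl, hij⟩ | ⟨rfl, hij⟩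
        · obtain rfl : i = 0 := Fin.ext (by simp; omega)
          exact ⟨(e, 1), by rw [show j = 1 from Fin.ext hij]; rfl⟩
        · obtain rfl : j = 0 := Fin.ext (by simp; omega)
          rw [Sym2.eq_swap]
          exact ⟨(f, 1), by rw [show i = 1 from Fin.ext hij]; rfl⟩
  · rintro ⟨⟨e, i⟩, rfl⟩
    fin_cases i <;>
      simp [subEdge, subdivision, SimpleGraph.fromRel_adj]

/-- An end edge shares an endpoint with its middle edge. -/
lemma edgeAdj_end_middle (e : G.edgeSet) {i : Fin 3} (hi : i ≠ 1) :
    edgeAdj (subEdge G (e, i)) (subEdge G (e, 1)) := by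
  refine ⟨fun h => hi (by simpa using subEdge_injective G h), ?_⟩
  fin_cases i
  · exact ⟨.inr (e, 0), by simp [subEdge], by simp [subEdge]⟩
  · exact absurd rfl hi
  · exact ⟨.inr (e, 1), by simp [subEdge], by simp [subEdge]⟩

lemma edgeAdj_symm {W : Type*} {a b : Sym2 W} (h : edgeAdj a b) : edgeAdj b a :=
  ⟨h.1.symm, h.2.imp fun _ h => h.symm⟩

lemma edgeAdj_middle_iff (e : G.edgeSet) (x : G.edgeSet × Fin 3) :
    edgeAdj (subEdge G (e, 1)) (subEdge G x) ↔ x.1 = e ∧ x.2 ≠ 1 := by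
  obtain ⟨f, i⟩ := x
  constructor
  · rintro ⟨hne, v, hv, hw⟩
    have hfe : f = e := by
      fin_cases i <;> simp [subEdge] at hv hw <;> rcases hv with rfl | rfl <;> simp_all
    subst hfe
    exact ⟨rfl, fun h => hne (by simp_all)⟩
  · rintro ⟨rfl, h⟩
    exact edgeAdj_symm (edgeAdj_end_middle G f h)

/-- The two end edges on the path replacing `e` are not adjacent, `G` having no loops. -/
lemma not_edgeAdj_ends (e : G.edgeSet) {i j : Fin 3} (hi : i ≠ 1) (hj : j ≠ 1) :
    ¬ edgeAdj (subEdge G (e, i)) (subEdge G (e, j)) := by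
  rintro ⟨hne, v, hv, hw⟩
  have := out_fst_ne_snd G e
  fin_cases i <;> fin_cases j <;> simp [subEdge] at hne hv hw hi hj <;>
    rcases hv with rfl | rfl <;> simp_all

/-- If `e` has an endpoint lying on no other edge, then the end edge at that endpoint has the
middle edge as its only neighbour. -/
lemma exists_pendant (e : G.edgeSet) {v : V} (hv : v ∈ e.1)
    (huniq : ∀ e' : G.edgeSet, v ∈ e'.1 → e' = e) :
    ∃ i, ∀ x, edgeAdj (subEdge G (e, i)) (subEdge G x) → x = (e, 1) := by
  have hne := out_fst_ne_snd G e
  simp only [mem_iff_out] at hv huniq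
  rcases hv with rfl | rfl
  · refine ⟨0, ?_⟩
    rintro ⟨f, j⟩ h
    have hfe : f = e := by
      obtain ⟨-, w, hw, hw'⟩ := h
      fin_cases j <;> simp [subEdge] at hw hw' <;> rcases hw with rfl | rfl <;> grind
    subst hfe
    by_contra hj
    exact not_edgeAdj_ends G f (by decide) (by simpa using hj) h
  · refine ⟨2, ?_⟩
    rintro ⟨f, j⟩ h
    have hfe : f = e := by
      obtain ⟨-, w, hw, hw'⟩ := h
      fin_cases j <;> simp [subEdge] at hw hw' <;> rcases hw with rfl | rfl <;> grind
    subst hfe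
    by_contra hj
    exact not_edgeAdj_ends G f (by decide) (by simpa using hj) h

variable {G}

lemma isTDEColoring_subdivision_iff (m : ℕ) (c : Sym2 (V ⊕ (G.edgeSet × Fin (3 - 1))) → ℕ) :
    IsTDEColoring (subdivision G 3) m c ↔
      (∀ x, c (subEdge G x) < m) ∧
      (∀ x y, edgeAdj (subEdge G x) (subEdge G y) → c (subEdge G x) ≠ c (subEdge G y)) ∧
      (∀ x, ∃ z, ∀ y, c (subEdge G y) = c (subEdge G z) →
        edgeAdj (subEdge G x) (subEdge G y)) := by
  simp only [IsTDEColoring, mem_edgeSet_subdivision_iff, forall_exists_index,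
    forall_apply_eq_imp_iff, exists_exists_eq_and]

/-- Colour the two end edges of the `k`-th edge of `G` with `k` and its middle edge with `m + k`,
where `m` is the number of edges. -/
lemma exists_coloring {m : ℕ} (φ : G.edgeSet ≃ Fin m) :
    ∃ c, IsTDEColoring (subdivision G 3) (2 * m) c := by
  let col : G.edgeSet × Fin 3 → ℕ := fun x => if x.2 = 1 then m + φ x.1 else φ x.1
  have hext : ∀ x, Function.extend (subEdge G) col 0 (subEdge G x) = col x :=
    fun x => (subEdge_injective G).extend_apply col 0 x
  have hcol : ∀ x y, col x = col y ↔ x.1 = y.1 ∧ (x.2 = 1 ↔ y.2 = 1) := by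
    intro x y
    have hx := (φ x.1).2
    have hy := (φ y.1).2
    have : x.1 = y.1 ↔ (φ x.1 : ℕ) = φ y.1 := by rw [← Fin.ext_iff, φ.apply_eq_iff_eq]
    rw [this]
    by_cases h1 : x.2 = 1 <;> by_cases h2 : y.2 = 1 <;> simp [col, h1, h2] <;> omega
  refine ⟨Function.extend (subEdge G) col 0, (isTDEColoring_subdivision_iff _ _).2 ?_⟩
  simp only [hext]
  refine ⟨fun x => ?_, fun x y hadj h => ?_, fun x => ?_⟩
  · have := (φ x.1).2
    by_cases h : x.2 = 1 <;> simp [col, h] <;> omega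
  · obtain ⟨e, i⟩ := x
    obtain ⟨f, j⟩ := y
    obtain ⟨rfl, hij⟩ := (hcol _ _).1 h
    by_cases hi : i = 1
    · have hj : j = 1 := hij.1 hi
      exact hadj.1 (by rw [hi, hj])
    · exact not_edgeAdj_ends G e hi (fun hj => hi (hij.2 hj)) hadj
  · obtain ⟨e, i⟩ := x
    by_cases hi : i = 1
    · subst hi
      refine ⟨(e, 0), fun y hy => ?_⟩
      rw [hcol] at hy
      exact (edgeAdj_middle_iff G e y).2 ⟨hy.1, fun h => by simp [h] at hy⟩
    · refine ⟨(e, 1), fun y hy => ?_⟩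
      rw [hcol] at hy
      rw [show y = (e, 1) from Prod.ext hy.1 (hy.2.2 rfl)]
      exact edgeAdj_end_middle G e hi

/-- When `e` has an endpoint of degree one, the middle edge of `e` is alone in its class. -/
lemma c_middle_unique {m : ℕ} {c : Sym2 (V ⊕ (G.edgeSet × Fin (3 - 1))) → ℕ}
    (hc : IsTDEColoring (subdivision G 3) m c) (e : G.edgeSet) {v : V} (hv : v ∈ e.1)
    (huniq : ∀ e' : G.edgeSet, v ∈ e'.1 → e' = e) (x : G.edgeSet × Fin 3)
    (hx : c (subEdge G x) = c (subEdge G (e, 1))) : x = (e, 1) := by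
  obtain ⟨-, -, hdom⟩ := (isTDEColoring_subdivision_iff m c).1 hc
  obtain ⟨i, hi⟩ := exists_pendant G e hv huniq
  obtain ⟨z, hz⟩ := hdom (e, i)
  have hze : z = (e, 1) := hi z (hz z rfl)
  subst hze
  exact hi x (hz x hx)

lemma two_mul_card_le [Fintype G.edgeSet]
    (hleaf : ∀ e : G.edgeSet, ∃ v ∈ e.1, ∀ e' : G.edgeSet, v ∈ e'.1 → e' = e)
    {m : ℕ} {c : Sym2 (V ⊕ (G.edgeSet × Fin (3 - 1))) → ℕ}
    (hc : IsTDEColoring (subdivision G 3) m c) : 2 * Fintype.card G.edgeSet ≤ m := by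
  obtain ⟨hlt, -, hdom⟩ := (isTDEColoring_subdivision_iff m c).1 hc
  have hmid : ∀ (e : G.edgeSet) x, c (subEdge G x) = c (subEdge G (e, 1)) → x = (e, 1) := by
    intro e
    obtain ⟨v, hv, huniq⟩ := hleaf e
    exact c_middle_unique hc e hv huniq
  -- `z e` is an end edge of `e` whose class dominates the middle edge of `e`.
  choose z hz using fun e : G.edgeSet => hdom (e, 1)
  simp only [edgeAdj_middle_iff] at hz
  let F : G.edgeSet ⊕ G.edgeSet → Fin m :=
    Sum.elim (fun e => ⟨_, hlt (e, 1)⟩) (fun e => ⟨_, hlt (z e)⟩)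
  have hF : Function.Injective F := by
    rintro (e | e) (f | f) h <;> simp only [F, Sum.elim_inl, Sum.elim_inr, Fin.mk.injEq] at h
    · have := hmid f _ h
      simp_all
    · exact absurd (by rw [hmid e _ h.symm]) (hz f _ rfl).2
    · exact absurd (by rw [hmid f _ h]) (hz e _ rfl).2
    · rw [← (hz e _ rfl).1, (hz f _ h).1]
  have := Fintype.card_le_of_injective F hF
  simp only [Fintype.card_sum, Fintype.card_fin] at this
  omega

end Subdivision

/-- The edges of the star `K_{1,n}` correspond to its leaves. -/
noncomputable def starEdgeEquiv (n : ℕ) :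
    Fin n ≃ (completeBipartiteGraph (Fin 1) (Fin n)).edgeSet :=
  Equiv.ofBijective (fun i => ⟨s(.inl 0, .inr i), by simp⟩) <| by
    constructor
    · intro i j h
      simpa using h
    · rintro ⟨e, he⟩
      induction e with
      | _ a b =>
        rcases a with a | a <;> rcases b with b | b <;> simp at he
        · exact ⟨b, by simp [Subsingleton.elim a 0]⟩
        · exact ⟨a, by simp [Subsingleton.elim b 0]⟩

lemma starEdgeEquiv_apply (n : ℕ) (i : Fin n) :
    (starEdgeEquiv n i).1 = s(.inl 0, .inr i) := rfl

lemma star_leaf (n : ℕ) (e : (completeBipartiteGraph (Fin 1) (Fin n)).edgeSet) :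
    ∃ v ∈ e.1, ∀ e' : (completeBipartiteGraph (Fin 1) (Fin n)).edgeSet, v ∈ e'.1 → e' = e := by
  obtain ⟨i, rfl⟩ := (starEdgeEquiv n).surjective e
  refine ⟨.inr i, by simp [starEdgeEquiv_apply], fun e' he' => ?_⟩
  obtain ⟨j, rfl⟩ := (starEdgeEquiv n).surjective e'
  have : i = j := by simpa [starEdgeEquiv_apply] using he'
  rw [this]

/-- For n ≥ 3, the 3-subdivision of the star K_{1,n} satisfies
χ'ᵗ_d(K_{1,n}^{1/3}) = 2n. -/
theorem tdec_subdivision_star (n : ℕ) (hn : 3 ≤ n) :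
    tdec (subdivision (completeBipartiteGraph (Fin 1) (Fin n)) 3) = 2 * n := by
  have hmem := exists_coloring (starEdgeEquiv n).symm
  refine le_antisymm (Nat.sInf_le hmem) (le_csInf ⟨_, hmem⟩ ?_)
  rintro m ⟨c, hc⟩
  let _ : Fintype (completeBipartiteGraph (Fin 1) (Fin n)).edgeSet :=
    Fintype.ofEquiv _ (starEdgeEquiv n)
  have := two_mul_card_le (star_leaf n) hc
  rwa [← Fintype.card_congr (starEdgeEquiv n), Fintype.card_fin] at this
end
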